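/- arXiv:2602.16688 — 5 statements merged into one kernel-verified Lean document; each statement's English description precedes it below -/
import Mathlib

section
/- Let (U,d) be a nonempty finite metric space with diameter D := max_{a,b ∈ U} d(a,b), let A, B partition U with A nonempty, let 1 ≤ k ≤ |A|, let x ∉ U, U' := U ∪ {x}, and let d' extend d with d'(u,x) = d'(x,u) := 3D+1 for all u ∈ U. Call S' ⊆ U' fair-feasible if |S' ∩ A| = k and |S' ∩ (B ∪ {x})| = 1. Then the minimum of cost(S') := max_{u ∈ U'} min_{s ∈ S'} d'(u,s) over all fair-feasible S' equals the minimum of cost(S) := max_{u ∈ U} min_{s ∈ S} d(u,s) over all S ⊆ A with |S| = k. -/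
/-!
Every clustering cost on `U` is at most `D`, whereas covering the far point `none` by a point of
`U`, or a point of `U` by `none`, already costs `3D + 1 > D`.

* Adjoining `none` to `S ⊆ A` gives a fair-feasible set of cost at most that of `S`.
* From a fair-feasible `S'` keep the centers `S` in `A`. A client of `U` whose nearest center in
  `S'` is not in `A` is served either by `none`, or by a point of `B`; in the latter case
  `none ∉ S'`, so the client `none` pays `3D + 1`. Either way `S'` costs at least `3D + 1`,
  which exceeds the cost of `S`.

Both comparisons rest on `kcost_le_iff`: a cost is at most `r` exactly when every client has a
center within distance `r`.
-/

/-- The k-center clustering cost of a (nonempty) set `S` of centers on a (finite,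
nonempty) space `X` with distance `dist`: the maximum over clients `u : X` of the
distance from `u` to its nearest center in `S`. -/
noncomputable def kcost {X : Type*} (dist : X → X → ℝ) (S : Finset X) : ℝ :=
  ⨆ u : X, ⨅ s : S, dist u (s : X)

theorem kcost_le_iff {X : Type*} [Finite X] [Nonempty X] (dist : X → X → ℝ) {S : Finset X}
    (hS : S.Nonempty) (r : ℝ) :
    kcost dist S ≤ r ↔ ∀ u, ∃ s ∈ S, dist u s ≤ r := by
  have : Nonempty S := hS.to_subtype
  unfold kcost
  rw [ciSup_le_iff (Set.finite_range _).bddAbove]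
  refine forall_congr' fun u => ⟨fun h => ?_, ?_⟩
  · -- the infimum over the finite set `S` is attained
    obtain ⟨s, hs⟩ := exists_eq_ciInf_of_finite (f := fun s : S => dist u s)
    exact ⟨s, s.2, hs.trans_le h⟩
  · rintro ⟨s, hs, h⟩
    exact (ciInf_le (Set.finite_range fun s : S => dist u s).bddBelow ⟨s, hs⟩).trans h

theorem kcost_nonneg {X : Type*} (dist : X → X → ℝ) (h : ∀ a b, 0 ≤ dist a b) (S : Finset X) :
    0 ≤ kcost dist S :=
  Real.iSup_nonneg fun _ => Real.iInf_nonneg fun _ => h _ _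

/-- Let `U = A ∪ B` (disjoint), `A` nonempty, `1 ≤ k ≤ |A|`, and let
`U' = U ∪ {x}` (with `x = none`) place `x` at distance `3D + 1` from every point of
`U`.  A set `S' ⊆ U'` is fair-feasible if it has exactly `k` points in `G1 = A` and
exactly one point in `G2 = B ∪ {x}`.  Then the minimum clustering cost over
fair-feasible sets equals the minimum clustering cost (on `U`) over `S ⊆ A` with
`|S| = k`. -/
theorem fair_kcenter_two_groups_opt_eq_forbidden_opt
    {U : Type*} [Fintype U] [Nonempty U] [DecidableEq U] (d : U → U → ℝ)
    (hsymm : ∀ a b : U, d a b = d b a)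
    (heq : ∀ a b : U, d a b = 0 ↔ a = b)
    (htri : ∀ a b c : U, d a c ≤ d a b + d b c)
    (D : ℝ) (hD : D = ⨆ p : U × U, d p.1 p.2)
    (A B : Finset U) (hA : A.Nonempty) (hdisj : Disjoint A B)
    (hunion : A ∪ B = Finset.univ)
    (k : ℕ) (hk1 : 1 ≤ k) (hk2 : k ≤ A.card)
    (d' : Option U → Option U → ℝ)
    (hUU : ∀ u v : U, d' (some u) (some v) = d u v)
    (hxx : d' none none = 0)
    (hux : ∀ u : U, d' (some u) none = 3 * D + 1)
    (hxu : ∀ u : U, d' none (some u) = 3 * D + 1) :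
    sInf {c : ℝ | ∃ S' : Finset (Option U),
        (S' ∩ A.image some).card = k ∧
        (S' ∩ insert none (B.image some)).card = 1 ∧
        c = kcost d' S'} =
    sInf {c : ℝ | ∃ S : Finset U, S ⊆ A ∧ S.card = k ∧ c = kcost d S} := by
  have hle : ∀ a b, d a b ≤ D := fun a b => hD ▸
    le_ciSup (f := fun p : U × U => d p.1 p.2) (Set.finite_range _).bddAbove (a, b)
  have hnn : ∀ a b, 0 ≤ d a b := fun a b => by
    linarith [htri a b a, hsymm a b, (heq a a).2 rfl]
  have hD0 : 0 ≤ D := (hnn hA.choose hA.choose).trans (hle _ _)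
  have hnn' : ∀ a b, 0 ≤ d' a b := by
    rintro (_ | a) (_ | b)
    · exact hxx.ge
    · rw [hxu]; linarith
    · rw [hux]; linarith
    · rw [hUU]; exact hnn a b
  have to_fair : ∀ S : Finset U, S ⊆ A → S.card = k → ∃ S' : Finset (Option U),
      (S' ∩ A.image some).card = k ∧ (S' ∩ insert none (B.image some)).card = 1 ∧
      kcost d' S' ≤ kcost d S := by
    intro S hSA hSk
    have hS : S.Nonempty := Finset.card_pos.1 (by omega)
    refine ⟨insert none (S.image some), ?_, ?_, ?_⟩
    · have : insert none (S.image some) ∩ A.image some = S.image some := by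
        ext (_ | a)
        · simp
        · simpa using fun h => hSA h
      rw [this, Finset.card_image_of_injective _ (Option.some_injective U), hSk]
    · have : insert none (S.image some) ∩ insert none (B.image some) = {none} := by
        ext (_ | a)
        · simp
        · simpa using fun h => Finset.disjoint_left.1 hdisj (hSA h)
      rw [this, Finset.card_singleton]
    · rw [kcost_le_iff d' (Finset.insert_nonempty _ _)]
      rintro (_ | u)
      · exact ⟨none, Finset.mem_insert_self _ _, hxx.trans_le (kcost_nonneg d hnn S)⟩
      · obtain ⟨s, hs, h⟩ := (kcost_le_iff d hS _).1 le_rfl u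
        exact ⟨some s, by simpa using hs, (hUU u s).trans_le h⟩
  have of_fair : ∀ S' : Finset (Option U), (S' ∩ A.image some).card = k →
      (S' ∩ insert none (B.image some)).card = 1 →
      ∃ S : Finset U, S ⊆ A ∧ S.card = k ∧ kcost d S ≤ kcost d' S' := by
    intro S' h1 h2
    have hcard : (A.filter (fun a => some a ∈ S')).card = k := by
      rw [← h1, ← Finset.card_image_of_injective _ (Option.some_injective U)]
      congr 1
      ext (_ | a)
      · simp
      · simp [and_comm]
    have hS : (A.filter (fun a => some a ∈ S')).Nonempty := Finset.card_pos.1 (by omega)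
    obtain ⟨t, ht⟩ := hS
    have hS' : S'.Nonempty := ⟨_, (Finset.mem_filter.1 ht).2⟩
    refine ⟨_, Finset.filter_subset _ _, hcard, ?_⟩
    have hcov := (kcost_le_iff d' hS' _).1 le_rfl
    rw [kcost_le_iff d ⟨t, ht⟩]
    intro u
    obtain ⟨s, hs, h⟩ := hcov (some u)
    rcases s with _ | v
    · rw [hux] at h
      exact ⟨t, ht, by linarith [hle u t]⟩
    · by_cases hv : v ∈ A
      · exact ⟨v, Finset.mem_filter.2 ⟨hv, hs⟩, (hUU u v).symm.trans_le h⟩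
      · have hvB : v ∈ B := by
          have := Finset.mem_univ v
          rw [← hunion, Finset.mem_union] at this
          exact this.resolve_left hv
        obtain ⟨w, hw, hw'⟩ := hcov none
        rcases w with _ | w
        · -- `none` and `some v` would be two centers in `B ∪ {x}`
          exact absurd (Finset.card_le_one.1 h2.le none (by simp [hw]) (some v)
            (by simp [hs, hvB])) (by simp)
        · rw [hxu] at hw'
          exact ⟨t, ht, by linarith [hle u t]⟩
  obtain ⟨S₀, hS₀A, hS₀k⟩ := Finset.exists_subset_card_eq hk2
  obtain ⟨T₀, hT₁, hT₂, -⟩ := to_fair S₀ hS₀A hS₀k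
  apply le_antisymm
  · refine le_csInf ⟨_, S₀, hS₀A, hS₀k, rfl⟩ ?_
    rintro _ ⟨S, hSA, hSk, rfl⟩
    obtain ⟨S', h1, h2, h⟩ := to_fair S hSA hSk
    refine le_trans (csInf_le ⟨0, ?_⟩ ⟨S', h1, h2, rfl⟩) h
    rintro _ ⟨_, -, -, rfl⟩
    exact kcost_nonneg d' hnn' _
  · refine le_csInf ⟨_, T₀, hT₁, hT₂, rfl⟩ ?_
    rintro _ ⟨S', h1, h2, rfl⟩
    obtain ⟨S, hSA, hSk, h⟩ := of_fair S' h1 h2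
    refine le_trans (csInf_le ⟨0, ?_⟩ ⟨S, hSA, hSk, rfl⟩) h
    rintro _ ⟨_, -, -, rfl⟩
    exact kcost_nonneg d hnn _
end

section
/- Let (U,d) be a finite metric space with at least two points partitioned into disjoint nonempty groups G1 and G2, let r1, r2 ≥ 1 with r1 ≤ |G1| and r2 ≤ |G2|, and let k := r1 + r2. Let Δ := min{ d(u,v) : u,v ∈ U, u ≠ v } and δ := Δ/2. Let U' be the blow-up in which each u ∈ G_i is replaced by r_i labeled copies (u,1),…,(u,r_i), with d'(x,y) := 0 if x = y, δ if x ≠ y and the copies have the same original, and d(π(x),π(y)) otherwise, and with k groups H^i_a := { (u,a) : u ∈ G_i } for i ∈ {1,2}, a ∈ {1,…,r_i}. Then for every S* ⊆ U with |S* ∩ G1| = r1 and |S* ∩ G2| = r2, there exists Ŝ ⊆ U' containing exactly one point from each of the k groups H^i_a such that max_{x ∈ U'} min_{s ∈ Ŝ} d'(x,s) ≤ max( max_{u ∈ U} min_{s ∈ S*} d(u,s), δ ). -/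
/-- The one-per-group blow-up of a two-group instance: each point of `G1` gets `r1`
labeled copies and each point of `G2` gets `r2` labeled copies. -/
abbrev Blowup {U : Type*} (G1 G2 : Finset U) (r1 r2 : ℕ) : Type _ :=
  ({u // u ∈ G1} × Fin r1) ⊕ ({u // u ∈ G2} × Fin r2)

/-- Projection of a copy to its original point. -/
def bproj {U : Type*} {G1 G2 : Finset U} {r1 r2 : ℕ} : Blowup G1 G2 r1 r2 → U :=
  Sum.elim (fun p => p.1.1) (fun p => p.1.1)

/-- The group `H¹ₐ` of `a`-th copies of points of `G1`. -/
def grp1 {U : Type*} [DecidableEq U] (G1 G2 : Finset U) (r1 r2 : ℕ) (a : Fin r1) :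
    Finset (Blowup G1 G2 r1 r2) :=
  Finset.univ.image fun u : {u // u ∈ G1} => Sum.inl (u, a)

/-- The group `H²ₐ` of `a`-th copies of points of `G2`. -/
def grp2 {U : Type*} [DecidableEq U] (G1 G2 : Finset U) (r1 r2 : ℕ) (a : Fin r2) :
    Finset (Blowup G1 G2 r1 r2) :=
  Finset.univ.image fun u : {u // u ∈ G2} => Sum.inr (u, a)

/-- `S` contains exactly one point from each of the `r1 + r2` groups of the blow-up. -/
def OnePerGroup {U : Type*} [DecidableEq U] (G1 G2 : Finset U) (r1 r2 : ℕ)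
    (S : Finset (Blowup G1 G2 r1 r2)) : Prop :=
  (∀ a : Fin r1, (S ∩ grp1 G1 G2 r1 r2 a).card = 1) ∧
  (∀ a : Fin r2, (S ∩ grp2 G1 G2 r1 r2 a).card = 1)

/-- If every center in `S` has a preimage in `T` under `π`, and distances in `Y` are at most `δ`
within fibres of `π` and inherited from `X` across fibres, then lifting `S` to `T` raises the
cost to at most `max (kcost d S) δ`. -/
lemma kcost_lift_le {X Y : Type*} [Finite X] [Finite Y] [Nonempty Y] (d : X → X → ℝ)
    (d' : Y → Y → ℝ) (π : Y → X) (δ : ℝ) (S : Finset X) (T : Finset Y) (hS : S.Nonempty)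
    (hfib : ∀ x y, π x = π y → d' x y ≤ δ)
    (hdist : ∀ x y, π x ≠ π y → d' x y = d (π x) (π y))
    (hlift : ∀ s ∈ S, ∃ y ∈ T, π y = s) :
    kcost d' T ≤ max (kcost d S) δ := by
  refine ciSup_le fun x => ?_
  have : Nonempty S := hS.to_subtype
  obtain ⟨⟨s, hs⟩, hmin⟩ := exists_eq_ciInf_of_finite (f := fun s : S => d (π x) s)
  obtain ⟨y, hyT, rfl⟩ := hlift s hs
  refine (ciInf_le (Set.finite_range _).bddBelow (⟨y, hyT⟩ : T)).trans ?_
  by_cases hxy : π x = π y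
  · exact (hfib x y hxy).trans (le_max_right _ _)
  · refine le_trans ?_ (le_max_left _ _)
    rw [hdist x y hxy]
    exact hmin.le.trans
      (le_ciSup (f := fun u => ⨅ s : S, d u s) (Set.finite_range _).bddAbove (π x))

/-- Every fair solution `S*` of the two-group instance (with `r_i`
centers in `G_i`) can be turned into a one-per-group solution `Ŝ` of the blow-up
instance whose clustering cost is at most `max (cost S*) δ`. -/
theorem fair_kcenter_blowup_of_two_group_solution
    {U : Type*} [Fintype U] [DecidableEq U] (hcard : 1 < Fintype.card U)
    (d : U → U → ℝ)
    (hsymm : ∀ a b : U, d a b = d b a)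
    (heq : ∀ a b : U, d a b = 0 ↔ a = b)
    (htri : ∀ a b c : U, d a c ≤ d a b + d b c)
    (G1 G2 : Finset U) (hG1 : G1.Nonempty) (hG2 : G2.Nonempty)
    (hdisj : Disjoint G1 G2) (hunion : G1 ∪ G2 = Finset.univ)
    (r1 r2 : ℕ) (hr1 : 1 ≤ r1) (hr2 : 1 ≤ r2)
    (hr1' : r1 ≤ G1.card) (hr2' : r2 ≤ G2.card)
    (k : ℕ) (hk : k = r1 + r2)
    (Δ δ : ℝ)
    (hΔ : Δ = sInf {r : ℝ | ∃ u v : U, u ≠ v ∧ r = d u v})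
    (hδ : δ = Δ / 2)
    (d' : Blowup G1 G2 r1 r2 → Blowup G1 G2 r1 r2 → ℝ)
    (h0 : ∀ x : Blowup G1 G2 r1 r2, d' x x = 0)
    (hcopy : ∀ x y : Blowup G1 G2 r1 r2, x ≠ y → bproj x = bproj y → d' x y = δ)
    (hdist : ∀ x y : Blowup G1 G2 r1 r2,
      bproj x ≠ bproj y → d' x y = d (bproj x) (bproj y)) :
    ∀ Sstar : Finset U, (Sstar ∩ G1).card = r1 → (Sstar ∩ G2).card = r2 →
      ∃ Shat : Finset (Blowup G1 G2 r1 r2), OnePerGroup G1 G2 r1 r2 Shat ∧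
        kcost d' Shat ≤ max (kcost d Sstar) δ := by
  intro Sstar hS1 hS2
  have hnonneg : ∀ a b, 0 ≤ d a b := fun a b => by
    have h := htri a b a
    rw [(heq a a).2 rfl, hsymm b a] at h
    linarith
  have hδ0 : 0 ≤ δ := by
    have : 0 ≤ Δ := by
      rw [hΔ]
      refine Real.sInf_nonneg ?_
      rintro _ ⟨u, v, -, rfl⟩
      exact hnonneg u v
    linarith
  let e1 := ((Sstar ∩ G1).equivFinOfCardEq hS1).symm
  let e2 := ((Sstar ∩ G2).equivFinOfCardEq hS2).symm
  let c1 : Fin r1 → Blowup G1 G2 r1 r2 := fun a =>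
    Sum.inl (⟨(e1 a).1, (Finset.mem_inter.1 (e1 a).2).2⟩, a)
  let c2 : Fin r2 → Blowup G1 G2 r1 r2 := fun a =>
    Sum.inr (⟨(e2 a).1, (Finset.mem_inter.1 (e2 a).2).2⟩, a)
  refine ⟨Finset.univ.image c1 ∪ Finset.univ.image c2, ⟨fun a => ?_, fun a => ?_⟩, ?_⟩
  · refine Finset.card_eq_one.2 ⟨c1 a, ?_⟩
    ext x
    simp only [grp1, Finset.mem_inter, Finset.mem_union, Finset.mem_image, Finset.mem_univ,
      true_and, Finset.mem_singleton]
    constructor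
    · rintro ⟨⟨b, rfl⟩ | ⟨b, rfl⟩, u, hu⟩
      · obtain rfl : a = b := congrArg Prod.snd (Sum.inl.inj hu)
        rfl
      · cases hu
    · rintro rfl
      exact ⟨Or.inl ⟨a, rfl⟩, _, rfl⟩
  · refine Finset.card_eq_one.2 ⟨c2 a, ?_⟩
    ext x
    simp only [grp2, Finset.mem_inter, Finset.mem_union, Finset.mem_image, Finset.mem_univ,
      true_and, Finset.mem_singleton]
    constructor
    · rintro ⟨⟨b, rfl⟩ | ⟨b, rfl⟩, u, hu⟩
      · cases hu
      · obtain rfl : a = b := congrArg Prod.snd (Sum.inr.inj hu)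
        rfl
    · rintro rfl
      exact ⟨Or.inr ⟨a, rfl⟩, _, rfl⟩
  · have : Nonempty (Blowup G1 G2 r1 r2) := ⟨c1 ⟨0, hr1⟩⟩
    refine kcost_lift_le d d' bproj δ Sstar _
      ⟨_, (Finset.mem_inter.1 (e1 ⟨0, hr1⟩).2).1⟩ (fun x y hxy => ?_) hdist fun s hs => ?_
    · by_cases h : x = y
      · rw [h, h0]
        exact hδ0
      · exact (hcopy x y h hxy).le
    · have hsU : s ∈ G1 ∪ G2 := hunion ▸ Finset.mem_univ s
      rcases Finset.mem_union.1 hsU with h | h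
      · refine ⟨c1 (e1.symm ⟨s, Finset.mem_inter.2 ⟨hs, h⟩⟩),
          Finset.mem_union_left _ (Finset.mem_image_of_mem _ (Finset.mem_univ _)), ?_⟩
        simp [c1, bproj]
      · refine ⟨c2 (e2.symm ⟨s, Finset.mem_inter.2 ⟨hs, h⟩⟩),
          Finset.mem_union_right _ (Finset.mem_image_of_mem _ (Finset.mem_univ _)), ?_⟩
        simp [c2, bproj]
end

section
/- Let (U,d) be a finite metric space with at least two points partitioned into disjoint nonempty groups G1 and G2, let r1, r2 ≥ 1 with r1 ≤ |G1|, r2 ≤ |G2|, and k := r1 + r2 < |U|. Let Δ := min{ d(u,v) : u,v ∈ U, u ≠ v }, δ := Δ/2, and let (U',d') be the one-per-group blow-up with groups H^i_a as above. Then the minimum over all Ŝ ⊆ U' containing exactly one point from each group H^i_a of max_{x ∈ U'} min_{s ∈ Ŝ} d'(x,s) is at most the minimum over all S ⊆ U with |S ∩ G1| = r1 and |S ∩ G2| = r2 of max_{u ∈ U} min_{s ∈ S} d(u,s). -/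
/-- Each client's nearest center realizes a distance bounded by the cost. -/
lemma exists_dist_le_kcost {X : Type*} [Finite X] (f : X → X → ℝ) {S : Finset X}
    (hS : S.Nonempty) (u : X) : ∃ s ∈ S, f u s ≤ kcost f S := by
  have : Nonempty S := hS.to_subtype
  obtain ⟨s, hs⟩ := exists_eq_ciInf_of_finite (f := fun s : S => f u (s : X))
  refine ⟨s, s.2, ?_⟩
  have h := le_ciSup (f := fun u : X => ⨅ s : S, f u (s : X)) (Set.finite_range _).bddAbove u
  exact hs.le.trans h

lemma kcost_le {X : Type*} [Finite X] [Nonempty X] (f : X → X → ℝ) {S : Finset X} {c : ℝ}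
    (h : ∀ u, ∃ s ∈ S, f u s ≤ c) : kcost f S ≤ c := by
  refine ciSup_le fun u => ?_
  obtain ⟨s, hs, hc⟩ := h u
  exact (ciInf_le (f := fun s : S => f u (s : X)) (Set.finite_range _).bddBelow ⟨s, hs⟩).trans hc

lemma kcost_nonneg_s11 {X : Type*} (f : X → X → ℝ) (hf : ∀ x y, 0 ≤ f x y) (S : Finset X) :
    0 ≤ kcost f S :=
  Real.iSup_nonneg fun _ => Real.iInf_nonneg fun _ => hf _ _

/-- A fair center set lifts to the blow-up: enumerate `S ∩ G_i` by `Fin r_i` and choose the `a`-th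
copy of the `a`-th point. -/
lemma exists_lift {U : Type*} [DecidableEq U] (G1 G2 : Finset U) (r1 r2 : ℕ) (S : Finset U)
    (h1 : (S ∩ G1).card = r1) (h2 : (S ∩ G2).card = r2) :
    ∃ T : Finset (Blowup G1 G2 r1 r2), OnePerGroup G1 G2 r1 r2 T ∧
      ∀ s ∈ S, s ∈ G1 ∪ G2 → ∃ y ∈ T, bproj y = s := by
  let e1 := ((S ∩ G1).equivFinOfCardEq h1).symm
  let e2 := ((S ∩ G2).equivFinOfCardEq h2).symm
  let f1 : Fin r1 → Blowup G1 G2 r1 r2 := fun a =>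
    Sum.inl (⟨(e1 a).1, (Finset.mem_inter.1 (e1 a).2).2⟩, a)
  let f2 : Fin r2 → Blowup G1 G2 r1 r2 := fun a =>
    Sum.inr (⟨(e2 a).1, (Finset.mem_inter.1 (e2 a).2).2⟩, a)
  refine ⟨Finset.univ.image f1 ∪ Finset.univ.image f2, ⟨fun a => ?_, fun a => ?_⟩, ?_⟩
  · rw [Finset.card_eq_one]
    refine ⟨f1 a, ?_⟩
    ext y
    simp only [Finset.mem_inter, Finset.mem_union, Finset.mem_image, Finset.mem_univ, true_and,
      grp1, Finset.mem_singleton]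
    constructor
    · rintro ⟨⟨b, rfl⟩ | ⟨b, rfl⟩, u, hu⟩
      · have hab : a = b := by
          have := Sum.inl.inj hu
          exact congrArg Prod.snd this
        rw [hab]
      · exact absurd hu (by simp [f2])
    · rintro rfl
      exact ⟨Or.inl ⟨a, rfl⟩, _, rfl⟩
  · rw [Finset.card_eq_one]
    refine ⟨f2 a, ?_⟩
    ext y
    simp only [Finset.mem_inter, Finset.mem_union, Finset.mem_image, Finset.mem_univ, true_and,
      grp2, Finset.mem_singleton]
    constructor
    · rintro ⟨⟨b, rfl⟩ | ⟨b, rfl⟩, u, hu⟩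
      · exact absurd hu (by simp [f1])
      · have hab : a = b := by
          have := Sum.inr.inj hu
          exact congrArg Prod.snd this
        rw [hab]
    · rintro rfl
      exact ⟨Or.inr ⟨a, rfl⟩, _, rfl⟩
  · intro s hs hG
    rcases Finset.mem_union.1 hG with h | h
    · refine ⟨f1 (e1.symm ⟨s, Finset.mem_inter.2 ⟨hs, h⟩⟩),
        Finset.mem_union_left _ (Finset.mem_image_of_mem _ (Finset.mem_univ _)), ?_⟩
      simp [f1, bproj]
    · refine ⟨f2 (e2.symm ⟨s, Finset.mem_inter.2 ⟨hs, h⟩⟩),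
        Finset.mem_union_right _ (Finset.mem_image_of_mem _ (Finset.mem_univ _)), ?_⟩
      simp [f2, bproj]

/-- The optimum of the one-per-group blow-up instance is at most the
optimum of the two-group fair instance (with `r_i` centers required in `G_i`). -/
theorem fair_kcenter_blowup_opt_le_two_group_opt
    {U : Type*} [Fintype U] [DecidableEq U] (hcard : 1 < Fintype.card U)
    (d : U → U → ℝ)
    (hsymm : ∀ a b : U, d a b = d b a)
    (heq : ∀ a b : U, d a b = 0 ↔ a = b)
    (htri : ∀ a b c : U, d a c ≤ d a b + d b c)
    (G1 G2 : Finset U) (hG1 : G1.Nonempty) (hG2 : G2.Nonempty)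
    (hdisj : Disjoint G1 G2) (hunion : G1 ∪ G2 = Finset.univ)
    (r1 r2 : ℕ) (hr1 : 1 ≤ r1) (hr2 : 1 ≤ r2)
    (hr1' : r1 ≤ G1.card) (hr2' : r2 ≤ G2.card)
    (Δ δ : ℝ)
    (hΔ : Δ = sInf {r : ℝ | ∃ u v : U, u ≠ v ∧ r = d u v})
    (hδ : δ = Δ / 2)
    (d' : Blowup G1 G2 r1 r2 → Blowup G1 G2 r1 r2 → ℝ)
    (h0 : ∀ x : Blowup G1 G2 r1 r2, d' x x = 0)
    (hcopy : ∀ x y : Blowup G1 G2 r1 r2, x ≠ y → bproj x = bproj y → d' x y = δ)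
    (hdist : ∀ x y : Blowup G1 G2 r1 r2,
      bproj x ≠ bproj y → d' x y = d (bproj x) (bproj y))
    (k : ℕ) (hk : k = r1 + r2) (hkU : k < Fintype.card U) :
    sInf {c : ℝ | ∃ Shat : Finset (Blowup G1 G2 r1 r2),
        OnePerGroup G1 G2 r1 r2 Shat ∧ c = kcost d' Shat} ≤
    sInf {c : ℝ | ∃ S : Finset U,
        (S ∩ G1).card = r1 ∧ (S ∩ G2).card = r2 ∧ c = kcost d S} := by
  have hd0 : ∀ a b, 0 ≤ d a b := fun a b => by
    have h := htri a b a
    rw [(heq a a).2 rfl, hsymm b a] at h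
    linarith
  have hΔ0 : 0 ≤ Δ := by
    rw [hΔ]
    refine Real.sInf_nonneg ?_
    rintro _ ⟨u, v, -, rfl⟩
    exact hd0 u v
  have hΔle : ∀ u v, u ≠ v → Δ ≤ d u v := fun u v huv => by
    rw [hΔ]
    refine csInf_le ⟨0, ?_⟩ ⟨u, v, huv, rfl⟩
    rintro _ ⟨u, v, -, rfl⟩
    exact hd0 u v
  have hd'0 : ∀ x y, 0 ≤ d' x y := fun x y => by
    by_cases hp : bproj x = bproj y
    · by_cases hxy : x = y
      · rw [hxy, h0]
      · rw [hcopy x y hxy hp]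
        linarith
    · rw [hdist x y hp]
      exact hd0 _ _
  have hbdd : BddBelow {c : ℝ | ∃ Shat : Finset (Blowup G1 G2 r1 r2),
      OnePerGroup G1 G2 r1 r2 Shat ∧ c = kcost d' Shat} := by
    refine ⟨0, ?_⟩
    rintro _ ⟨T, -, rfl⟩
    exact kcost_nonneg_s11 d' hd'0 T
  have : Nonempty (Blowup G1 G2 r1 r2) := ⟨Sum.inl (⟨hG1.choose, hG1.choose_spec⟩, ⟨0, hr1⟩)⟩
  refine le_csInf ?_ ?_
  · -- A feasible set exists since `r_i ≤ |G_i|`; otherwise the right-hand `sInf` would be `0`.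
    obtain ⟨A, hA, hAc⟩ := Finset.exists_subset_card_eq hr1'
    obtain ⟨B, hB, hBc⟩ := Finset.exists_subset_card_eq hr2'
    refine ⟨_, A ∪ B, ?_, ?_, rfl⟩
    · rw [Finset.union_inter_distrib_right, Finset.inter_eq_left.2 hA,
        Finset.disjoint_iff_inter_eq_empty.1 (hdisj.symm.mono_left hB), Finset.union_empty, hAc]
    · rw [Finset.union_inter_distrib_right, Finset.inter_eq_left.2 hB,
        Finset.disjoint_iff_inter_eq_empty.1 (hdisj.mono_left hA), Finset.empty_union, hBc]
  · rintro _ ⟨S, hS1, hS2, rfl⟩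
    obtain ⟨T, hT, hlift⟩ := exists_lift G1 G2 r1 r2 S hS1 hS2
    refine (csInf_le hbdd ⟨T, hT, rfl⟩).trans ?_
    have hSne : S.Nonempty := by
      have h : (S ∩ G1).Nonempty := Finset.card_pos.1 (by omega)
      exact h.mono Finset.inter_subset_left
    have hScard : S.card ≤ r1 + r2 := by
      have h : S = S ∩ G1 ∪ S ∩ G2 := by
        rw [← Finset.inter_union_distrib_left, hunion, Finset.inter_univ]
      calc S.card = (S ∩ G1 ∪ S ∩ G2).card := congrArg _ h
        _ ≤ _ := Finset.card_union_le _ _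
        _ = r1 + r2 := by rw [hS1, hS2]
    have hΔS : Δ ≤ kcost d S := by
      obtain ⟨w, hw⟩ : ∃ w, w ∉ S := by
        by_contra! h
        have := Finset.card_univ (α := U)
        rw [← Finset.eq_univ_iff_forall.2 h] at this
        omega
      obtain ⟨s, hs, hle⟩ := exists_dist_le_kcost d hSne w
      exact (hΔle w s fun h => hw (h ▸ hs)).trans hle
    refine kcost_le d' fun x => ?_
    obtain ⟨s, hs, hle⟩ := exists_dist_le_kcost d hSne (bproj x)
    obtain ⟨y, hy, rfl⟩ := hlift s hs (hunion ▸ Finset.mem_univ s)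
    refine ⟨y, hy, ?_⟩
    by_cases hp : bproj x = bproj y
    · by_cases hxy : x = y
      · rw [hxy, h0]
        exact hΔ0.trans hΔS
      · rw [hcopy x y hxy hp]
        linarith
    · rw [hdist x y hp]
      exact hle
end

section
/- Let (U,d) be a finite metric space with at least two points partitioned into disjoint nonempty groups G1 and G2, let r1, r2 ≥ 1 with r1 ≤ |G1| and r2 ≤ |G2|, let k := r1 + r2, and let (U',d') be the one-per-group blow-up with groups H^i_a and projection π. Then for every Ŝ ⊆ U' containing exactly one point from each of the k groups H^i_a, there exists Š ⊆ U with |Š ∩ G1| = r1, |Š ∩ G2| = r2, π(Ŝ) ⊆ Š, and max_{u ∈ U} min_{s ∈ Š} d(u,s) ≤ max_{x ∈ U'} min_{s ∈ Ŝ} d'(x,s). -/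
/-- Centers pushed forward along a surjective map that does not increase distances, and possibly
enlarged, cost no more than the original ones. -/
lemma kcost_le_of_proj {X Y : Type*} [Finite X] [Nonempty Y] {d : Y → Y → ℝ} {d' : X → X → ℝ}
    {p : X → Y} (hp : Function.Surjective p) (hle : ∀ x y, d (p x) (p y) ≤ d' x y)
    {S : Finset X} {T : Finset Y} (hS : S.Nonempty) (hST : ∀ z ∈ S, p z ∈ T) :
    kcost d T ≤ kcost d' S := by
  have : Nonempty S := hS.to_subtype
  refine ciSup_le fun u => ?_
  obtain ⟨x, rfl⟩ := hp u
  refine le_trans ?_ (le_ciSup (f := fun x : X => ⨅ s : S, d' x (s : X))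
    (Set.finite_range _).bddAbove x)
  refine le_ciInf fun s => ?_
  exact (ciInf_le (f := fun t : T => d (p x) (t : Y)) (Set.finite_range _).bddBelow
    ⟨p s, hST s s.2⟩).trans (hle x s)

lemma card_bproj_inter_le_one {U : Type*} [DecidableEq U] {G1 G2 : Finset U} {r1 r2 : ℕ}
    (hdisj : Disjoint G1 G2) {S : Finset (Blowup G1 G2 r1 r2)}
    (hS : ∀ a : Fin r1, (S ∩ grp1 G1 G2 r1 r2 a).card = 1) :
    (S.image bproj ∩ G1).card ≤ r1 := by
  have hsub : S.image bproj ∩ G1 ⊆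
      (Finset.univ.biUnion fun a : Fin r1 => S ∩ grp1 G1 G2 r1 r2 a).image bproj := by
    intro u hu
    obtain ⟨hu, huG⟩ := Finset.mem_inter.1 hu
    obtain ⟨z, hz, rfl⟩ := Finset.mem_image.1 hu
    refine Finset.mem_image_of_mem _ ?_
    rcases z with ⟨v, a⟩ | ⟨v, a⟩
    · exact Finset.mem_biUnion.2 ⟨a, Finset.mem_univ _, Finset.mem_inter.2
        ⟨hz, Finset.mem_image_of_mem _ (Finset.mem_univ v)⟩⟩
    · exact (Finset.disjoint_left.1 hdisj huG v.2).elim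
  calc (S.image bproj ∩ G1).card
      ≤ (Finset.univ.biUnion fun a : Fin r1 => S ∩ grp1 G1 G2 r1 r2 a).card :=
        (Finset.card_le_card hsub).trans Finset.card_image_le
    _ ≤ (Finset.univ : Finset (Fin r1)).card * 1 :=
        Finset.card_biUnion_le_card_mul _ _ _ fun a _ => (hS a).le
    _ = r1 := by simp

lemma card_bproj_inter_le_two {U : Type*} [DecidableEq U] {G1 G2 : Finset U} {r1 r2 : ℕ}
    (hdisj : Disjoint G1 G2) {S : Finset (Blowup G1 G2 r1 r2)}
    (hS : ∀ a : Fin r2, (S ∩ grp2 G1 G2 r1 r2 a).card = 1) :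
    (S.image bproj ∩ G2).card ≤ r2 := by
  have hsub : S.image bproj ∩ G2 ⊆
      (Finset.univ.biUnion fun a : Fin r2 => S ∩ grp2 G1 G2 r1 r2 a).image bproj := by
    intro u hu
    obtain ⟨hu, huG⟩ := Finset.mem_inter.1 hu
    obtain ⟨z, hz, rfl⟩ := Finset.mem_image.1 hu
    refine Finset.mem_image_of_mem _ ?_
    rcases z with ⟨v, a⟩ | ⟨v, a⟩
    · exact (Finset.disjoint_left.1 hdisj v.2 huG).elim
    · exact Finset.mem_biUnion.2 ⟨a, Finset.mem_univ _, Finset.mem_inter.2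
        ⟨hz, Finset.mem_image_of_mem _ (Finset.mem_univ v)⟩⟩
  calc (S.image bproj ∩ G2).card
      ≤ (Finset.univ.biUnion fun a : Fin r2 => S ∩ grp2 G1 G2 r1 r2 a).card :=
        (Finset.card_le_card hsub).trans Finset.card_image_le
    _ ≤ (Finset.univ : Finset (Fin r2)).card * 1 :=
        Finset.card_biUnion_le_card_mul _ _ _ fun a _ => (hS a).le
    _ = r2 := by simp
/-- Every one-per-group solution `Ŝ` of the blow-up instance projects
to a fair solution `Š` of the two-group instance (containing all projections of `Ŝ`)
whose clustering cost on `U` does not exceed the cost of `Ŝ` on the blow-up. -/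
theorem fair_kcenter_two_group_of_blowup_solution
    {U : Type*} [Fintype U] [DecidableEq U] (hcard : 1 < Fintype.card U)
    (d : U → U → ℝ)
    (hsymm : ∀ a b : U, d a b = d b a)
    (heq : ∀ a b : U, d a b = 0 ↔ a = b)
    (htri : ∀ a b c : U, d a c ≤ d a b + d b c)
    (G1 G2 : Finset U) (hG1 : G1.Nonempty) (hG2 : G2.Nonempty)
    (hdisj : Disjoint G1 G2) (hunion : G1 ∪ G2 = Finset.univ)
    (r1 r2 : ℕ) (hr1 : 1 ≤ r1) (hr2 : 1 ≤ r2)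
    (hr1' : r1 ≤ G1.card) (hr2' : r2 ≤ G2.card)
    (Δ δ : ℝ)
    (hΔ : Δ = sInf {r : ℝ | ∃ u v : U, u ≠ v ∧ r = d u v})
    (hδ : δ = Δ / 2)
    (d' : Blowup G1 G2 r1 r2 → Blowup G1 G2 r1 r2 → ℝ)
    (h0 : ∀ x : Blowup G1 G2 r1 r2, d' x x = 0)
    (hcopy : ∀ x y : Blowup G1 G2 r1 r2, x ≠ y → bproj x = bproj y → d' x y = δ)
    (hdist : ∀ x y : Blowup G1 G2 r1 r2,
      bproj x ≠ bproj y → d' x y = d (bproj x) (bproj y))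
    (k : ℕ) (hk : k = r1 + r2) :
    ∀ Shat : Finset (Blowup G1 G2 r1 r2), OnePerGroup G1 G2 r1 r2 Shat →
      ∃ Scheck : Finset U, (Scheck ∩ G1).card = r1 ∧ (Scheck ∩ G2).card = r2 ∧
        (∀ z ∈ Shat, bproj z ∈ Scheck) ∧
        kcost d Scheck ≤ kcost d' Shat := by
  have hd0 : ∀ a b : U, 0 ≤ d a b := fun a b => by
    have h := htri a b a
    rw [(heq a a).2 rfl, hsymm b a] at h
    linarith
  have hδ0 : 0 ≤ δ := by
    have hΔ0 : 0 ≤ Δ := by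
      rw [hΔ]
      refine Real.sInf_nonneg ?_
      rintro _ ⟨u, v, -, rfl⟩
      exact hd0 u v
    linarith
  have hle : ∀ x y : Blowup G1 G2 r1 r2, d (bproj x) (bproj y) ≤ d' x y := by
    intro x y
    by_cases hp : bproj x = bproj y
    · rw [(heq _ _).2 hp]
      by_cases hxy : x = y
      · rw [hxy, h0]
      · rw [hcopy x y hxy hp]
        exact hδ0
    · exact (hdist x y hp).ge
  have hsurj : Function.Surjective (bproj : Blowup G1 G2 r1 r2 → U) := by
    intro u
    have hu : u ∈ G1 ∪ G2 := hunion ▸ Finset.mem_univ u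
    rcases Finset.mem_union.1 hu with h | h
    · exact ⟨Sum.inl (⟨u, h⟩, ⟨0, hr1⟩), rfl⟩
    · exact ⟨Sum.inr (⟨u, h⟩, ⟨0, hr2⟩), rfl⟩
  intro Shat hS
  have hne : Shat.Nonempty := by
    have h : (Shat ∩ grp1 G1 G2 r1 r2 ⟨0, hr1⟩).Nonempty :=
      Finset.card_pos.1 (by rw [hS.1]; exact one_pos)
    exact h.mono Finset.inter_subset_left
  obtain ⟨T1, hT1, hT1G, hc1⟩ := Finset.exists_subsuperset_card_eq
    (Finset.inter_subset_right (s₁ := Shat.image bproj) (s₂ := G1))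
    (card_bproj_inter_le_one hdisj hS.1) hr1'
  obtain ⟨T2, hT2, hT2G, hc2⟩ := Finset.exists_subsuperset_card_eq
    (Finset.inter_subset_right (s₁ := Shat.image bproj) (s₂ := G2))
    (card_bproj_inter_le_two hdisj hS.2) hr2'
  have hmem : ∀ z ∈ Shat, bproj z ∈ T1 ∪ T2 := by
    intro z hz
    have hz' : bproj z ∈ Shat.image bproj := Finset.mem_image_of_mem _ hz
    have hu : bproj z ∈ G1 ∪ G2 := hunion ▸ Finset.mem_univ _
    rcases Finset.mem_union.1 hu with h | h
    · exact Finset.mem_union_left _ (hT1 (Finset.mem_inter.2 ⟨hz', h⟩))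
    · exact Finset.mem_union_right _ (hT2 (Finset.mem_inter.2 ⟨hz', h⟩))
  have hi1 : (T1 ∪ T2) ∩ G1 = T1 := by
    rw [Finset.union_inter_distrib_right, Finset.inter_eq_left.2 hT1G,
      Finset.disjoint_iff_inter_eq_empty.1 (hdisj.symm.mono_left hT2G), Finset.union_empty]
  have hi2 : (T1 ∪ T2) ∩ G2 = T2 := by
    rw [Finset.union_inter_distrib_right, Finset.inter_eq_left.2 hT2G,
      Finset.disjoint_iff_inter_eq_empty.1 (hdisj.mono_left hT1G), Finset.empty_union]
  have : Nonempty U := ⟨hG1.choose⟩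
  exact ⟨T1 ∪ T2, by rw [hi1, hc1], by rw [hi2, hc2], hmem, kcost_le_of_proj hsurj hle hne hmem⟩
end

section
/- Let (U,d) be a finite metric space with at least two points partitioned into disjoint nonempty groups G1 and G2, let r1, r2 ≥ 1 with r1 ≤ |G1|, r2 ≤ |G2|, and k := r1 + r2 < |U|, let (U',d') be the one-per-group blow-up with groups H^i_a, and let α ≥ 1. Let OPT' be the minimum over all T ⊆ U' containing exactly one point from each group H^i_a of max_{x ∈ U'} min_{s ∈ T} d'(x,s), and let OPT be the minimum over all T ⊆ U with |T ∩ G1| = r1 and |T ∩ G2| = r2 of max_{u ∈ U} min_{s ∈ T} d(u,s). If Ŝ ⊆ U' contains exactly one point from each group H^i_a and max_{x ∈ U'} min_{s ∈ Ŝ} d'(x,s) ≤ α · OPT', then there exists Š ⊆ U with |Š ∩ G1| = r1, |Š ∩ G2| = r2, and max_{u ∈ U} min_{s ∈ Š} d(u,s) ≤ α · OPT. -/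
theorem kcost_le_of_forall_exists {X : Type*} [Nonempty X] (D : X → X → ℝ) (S : Finset X) (c : ℝ)
    (h : ∀ u, ∃ s ∈ S, D u s ≤ c) : kcost D S ≤ c := by
  refine ciSup_le fun u => ?_
  obtain ⟨s, hs, hc⟩ := h u
  exact ciInf_le_of_le (Set.finite_range _).bddBelow (⟨s, hs⟩ : S) hc

theorem exists_le_kcost {X : Type*} [Finite X] (D : X → X → ℝ) (S : Finset X)
    (hS : S.Nonempty) (u : X) : ∃ s ∈ S, D u s ≤ kcost D S := by
  have : Nonempty S := hS.to_subtype
  obtain ⟨s, hs⟩ := exists_eq_ciInf_of_finite (f := fun s : S => D u (s : X))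
  refine ⟨s, s.2, hs.trans_le ?_⟩
  exact le_ciSup (f := fun u : X => ⨅ s : S, D u (s : X)) (Set.finite_range _).bddAbove u

/-- The set of copies that picks, for each label `a`, the `a`-th copy of `f₁ a` (in `G1`) and of
`f₂ a` (in `G2`). -/
def sectionSet {U : Type*} [DecidableEq U] {G1 G2 : Finset U} {r1 r2 : ℕ}
    (f₁ : Fin r1 → {u // u ∈ G1}) (f₂ : Fin r2 → {u // u ∈ G2}) :
    Finset (Blowup G1 G2 r1 r2) :=
  (Finset.univ.image fun a => Sum.inl (f₁ a, a)) ∪ Finset.univ.image fun a => Sum.inr (f₂ a, a)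

theorem onePerGroup_sectionSet {U : Type*} [DecidableEq U] {G1 G2 : Finset U} {r1 r2 : ℕ}
    (f₁ : Fin r1 → {u // u ∈ G1}) (f₂ : Fin r2 → {u // u ∈ G2}) :
    OnePerGroup G1 G2 r1 r2 (sectionSet f₁ f₂) := by
  constructor <;> intro a <;> rw [Finset.card_eq_one]
  · refine ⟨Sum.inl (f₁ a, a), ?_⟩
    ext x
    rcases x with ⟨u, b⟩ | ⟨u, b⟩ <;> simp [sectionSet, grp1] <;> grind
  · refine ⟨Sum.inr (f₂ a, a), ?_⟩
    ext x
    rcases x with ⟨u, b⟩ | ⟨u, b⟩ <;> simp [sectionSet, grp2] <;> grind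

theorem card_image_bproj_inter_le {U : Type*} [DecidableEq U] {G1 G2 : Finset U} {r1 r2 : ℕ}
    (hdisj : Disjoint G1 G2) {S : Finset (Blowup G1 G2 r1 r2)}
    (hS : OnePerGroup G1 G2 r1 r2 S) :
    (S.image bproj ∩ G1).card ≤ r1 ∧ (S.image bproj ∩ G2).card ≤ r2 := by
  have h1 := fun a => Finset.card_eq_one.mp (hS.1 a)
  have h2 := fun a => Finset.card_eq_one.mp (hS.2 a)
  choose g1 hg1 using h1
  choose g2 hg2 using h2
  constructor
  · have hsub : S.image bproj ∩ G1 ⊆ Finset.univ.image fun a => bproj (g1 a) := by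
      intro u hu
      obtain ⟨hu, huG⟩ := Finset.mem_inter.mp hu
      obtain ⟨x, hx, rfl⟩ := Finset.mem_image.mp hu
      rcases x with ⟨v, a⟩ | ⟨v, a⟩
      · have hm : (Sum.inl (v, a) : Blowup G1 G2 r1 r2) ∈ S ∩ grp1 G1 G2 r1 r2 a :=
          Finset.mem_inter.mpr ⟨hx, by simp [grp1]⟩
        rw [hg1 a, Finset.mem_singleton] at hm
        exact Finset.mem_image.mpr ⟨a, Finset.mem_univ _, by rw [hm]⟩
      · exact absurd v.2 (Finset.disjoint_left.mp hdisj huG)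
    simpa using (Finset.card_le_card hsub).trans Finset.card_image_le
  · have hsub : S.image bproj ∩ G2 ⊆ Finset.univ.image fun a => bproj (g2 a) := by
      intro u hu
      obtain ⟨hu, huG⟩ := Finset.mem_inter.mp hu
      obtain ⟨x, hx, rfl⟩ := Finset.mem_image.mp hu
      rcases x with ⟨v, a⟩ | ⟨v, a⟩
      · exact absurd huG (Finset.disjoint_left.mp hdisj v.2)
      · have hm : (Sum.inr (v, a) : Blowup G1 G2 r1 r2) ∈ S ∩ grp2 G1 G2 r1 r2 a :=
          Finset.mem_inter.mpr ⟨hx, by simp [grp2]⟩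
        rw [hg2 a, Finset.mem_singleton] at hm
        exact Finset.mem_image.mpr ⟨a, Finset.mem_univ _, by rw [hm]⟩
    simpa using (Finset.card_le_card hsub).trans Finset.card_image_le

/-- A set meeting each group in at most the prescribed number of points extends to one meeting
each group in exactly that number. -/
theorem exists_fair_superset {U : Type*} [Fintype U] [DecidableEq U] {G1 G2 P : Finset U}
    {r1 r2 : ℕ} (hdisj : Disjoint G1 G2) (hunion : G1 ∪ G2 = Finset.univ)
    (hr1 : r1 ≤ G1.card) (hr2 : r2 ≤ G2.card)
    (h1 : (P ∩ G1).card ≤ r1) (h2 : (P ∩ G2).card ≤ r2) :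
    ∃ T : Finset U, P ⊆ T ∧ (T ∩ G1).card = r1 ∧ (T ∩ G2).card = r2 := by
  obtain ⟨A, hPA, hA, hAc⟩ :=
    Finset.exists_subsuperset_card_eq (Finset.inter_subset_right (s₁ := P)) h1 hr1
  obtain ⟨B, hPB, hB, hBc⟩ :=
    Finset.exists_subsuperset_card_eq (Finset.inter_subset_right (s₁ := P)) h2 hr2
  have hcov : ∀ u, u ∈ G1 ∨ u ∈ G2 := fun u => by
    rw [← Finset.mem_union, hunion]; exact Finset.mem_univ u
  have hd := Finset.disjoint_left.mp hdisj
  refine ⟨A ∪ B, ?_, ?_, ?_⟩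
  · intro u hu
    rcases hcov u with h | h
    · exact Finset.mem_union_left _ (hPA (Finset.mem_inter.mpr ⟨hu, h⟩))
    · exact Finset.mem_union_right _ (hPB (Finset.mem_inter.mpr ⟨hu, h⟩))
  · rw [← hAc]; congr 1; ext u; have := hd (a := u); have := @hA u; have := @hB u; grind
  · rw [← hBc]; congr 1; ext u; have := hd (a := u); have := @hA u; have := @hB u; grind

/-- Any `α`-approximate one-per-group solution of the blow-up instance
yields an `α`-approximate fair solution of the two-group instance. -/
theorem fair_kcenter_blowup_approx_transfers
    {U : Type*} [Fintype U] [DecidableEq U] (hcard : 1 < Fintype.card U)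
    (d : U → U → ℝ)
    (hsymm : ∀ a b : U, d a b = d b a)
    (heq : ∀ a b : U, d a b = 0 ↔ a = b)
    (htri : ∀ a b c : U, d a c ≤ d a b + d b c)
    (G1 G2 : Finset U) (hG1 : G1.Nonempty) (hG2 : G2.Nonempty)
    (hdisj : Disjoint G1 G2) (hunion : G1 ∪ G2 = Finset.univ)
    (r1 r2 : ℕ) (hr1 : 1 ≤ r1) (hr2 : 1 ≤ r2)
    (hr1' : r1 ≤ G1.card) (hr2' : r2 ≤ G2.card)
    (Δ δ : ℝ)
    (hΔ : Δ = sInf {r : ℝ | ∃ u v : U, u ≠ v ∧ r = d u v})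
    (hδ : δ = Δ / 2)
    (d' : Blowup G1 G2 r1 r2 → Blowup G1 G2 r1 r2 → ℝ)
    (h0 : ∀ x : Blowup G1 G2 r1 r2, d' x x = 0)
    (hcopy : ∀ x y : Blowup G1 G2 r1 r2, x ≠ y → bproj x = bproj y → d' x y = δ)
    (hdist : ∀ x y : Blowup G1 G2 r1 r2,
      bproj x ≠ bproj y → d' x y = d (bproj x) (bproj y))
    (k : ℕ) (hk : k = r1 + r2) (hkU : k < Fintype.card U)
    (α : ℝ) (hα : 1 ≤ α)
    (OPT' : ℝ)
    (hOPT' : OPT' = sInf {c : ℝ | ∃ T : Finset (Blowup G1 G2 r1 r2),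
        OnePerGroup G1 G2 r1 r2 T ∧ c = kcost d' T})
    (OPT : ℝ)
    (hOPT : OPT = sInf {c : ℝ | ∃ T : Finset U,
        (T ∩ G1).card = r1 ∧ (T ∩ G2).card = r2 ∧ c = kcost d T})
    (Shat : Finset (Blowup G1 G2 r1 r2))
    (hShat : OnePerGroup G1 G2 r1 r2 Shat)
    (happrox : kcost d' Shat ≤ α * OPT') :
    ∃ Scheck : Finset U, (Scheck ∩ G1).card = r1 ∧ (Scheck ∩ G2).card = r2 ∧
      kcost d Scheck ≤ α * OPT := by
  have hnn : ∀ a b, 0 ≤ d a b := fun a b => by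
    have h1 := htri a b a
    rw [(heq a a).mpr rfl, hsymm b a] at h1
    linarith
  have hΔ0 : 0 ≤ Δ := by
    rw [hΔ]
    refine Real.sInf_nonneg ?_
    rintro r ⟨u, v, -, rfl⟩
    exact hnn u v
  have hΔle : ∀ u v, u ≠ v → Δ ≤ d u v := fun u v huv => by
    rw [hΔ]
    refine csInf_le ⟨0, ?_⟩ ⟨u, v, huv, rfl⟩
    rintro r ⟨u, v, -, rfl⟩
    exact hnn u v
  have hcov : ∀ u, u ∈ G1 ∨ u ∈ G2 := fun u => by
    rw [← Finset.mem_union, hunion]; exact Finset.mem_univ u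
  have : Nonempty U := ⟨hG1.choose⟩
  have : Nonempty (Blowup G1 G2 r1 r2) := ⟨Sum.inl (⟨hG1.choose, hG1.choose_spec⟩, ⟨0, hr1⟩)⟩
  have hsurj : ∀ u, ∃ x : Blowup G1 G2 r1 r2, bproj x = u := fun u => by
    rcases hcov u with h | h
    · exact ⟨Sum.inl (⟨u, h⟩, ⟨0, hr1⟩), rfl⟩
    · exact ⟨Sum.inr (⟨u, h⟩, ⟨0, hr2⟩), rfl⟩
  have hproj : ∀ x y : Blowup G1 G2 r1 r2, d (bproj x) (bproj y) ≤ d' x y := fun x y => by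
    by_cases hb : bproj x = bproj y
    · rw [(heq _ _).mpr hb]
      by_cases hxy : x = y
      · rw [hxy, h0]
      · rw [hcopy x y hxy hb, hδ]; linarith
    · rw [hdist x y hb]
  have hlift : ∀ T : Finset U, (T ∩ G1).card = r1 → (T ∩ G2).card = r2 →
      OPT' ≤ kcost d T := by
    intro T h1 h2
    have hTne : T.Nonempty := by
      have : 0 < (T ∩ G1).card := by omega
      exact (Finset.card_pos.mp this).mono Finset.inter_subset_left
    have hcT : T.card = r1 + r2 := by
      rw [← h1, ← h2, ← Finset.card_union_of_disjoint, ← Finset.inter_union_distrib_left, hunion,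
        Finset.inter_univ]
      exact hdisj.mono Finset.inter_subset_right Finset.inter_subset_right
    -- Some client lies outside `T`, so its distance to `T` is at least `Δ`.
    have hδT : δ ≤ kcost d T := by
      obtain ⟨u, hu⟩ : ∃ u, u ∉ T := by
        by_contra! hall
        rw [Finset.eq_univ_iff_forall.mpr hall, Finset.card_univ] at hcT
        omega
      obtain ⟨s, hs, hle⟩ := exists_le_kcost d T hTne u
      have := hΔle u s (fun h => hu (h ▸ hs))
      linarith
    have e1 := (T ∩ G1).equivFinOfCardEq h1
    have e2 := (T ∩ G2).equivFinOfCardEq h2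
    let f₁ : Fin r1 → {u // u ∈ G1} := fun a =>
      ⟨(e1.symm a).1, (Finset.mem_inter.mp (e1.symm a).2).2⟩
    let f₂ : Fin r2 → {u // u ∈ G2} := fun a =>
      ⟨(e2.symm a).1, (Finset.mem_inter.mp (e2.symm a).2).2⟩
    have hmem : ∀ t ∈ T, ∃ y ∈ sectionSet f₁ f₂, bproj y = t := by
      intro t ht
      rcases hcov t with h | h
      · have ht' := Finset.mem_inter.mpr ⟨ht, h⟩
        refine ⟨Sum.inl (f₁ (e1 ⟨t, ht'⟩), e1 ⟨t, ht'⟩), ?_, ?_⟩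
        · simp [sectionSet]
        · simp [bproj, f₁]
      · have ht' := Finset.mem_inter.mpr ⟨ht, h⟩
        refine ⟨Sum.inr (f₂ (e2 ⟨t, ht'⟩), e2 ⟨t, ht'⟩), ?_, ?_⟩
        · simp [sectionSet]
        · simp [bproj, f₂]
    have hle : OPT' ≤ kcost d' (sectionSet f₁ f₂) := by
      rw [hOPT']
      refine csInf_le (Set.Finite.bddBelow ?_) ⟨_, onePerGroup_sectionSet f₁ f₂, rfl⟩
      refine (Set.finite_range fun T => kcost d' T).subset ?_
      rintro c ⟨T, -, rfl⟩
      exact ⟨T, rfl⟩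
    refine hle.trans (kcost_le_of_forall_exists _ _ _ fun x => ?_)
    obtain ⟨t, ht, hdt⟩ := exists_le_kcost d T hTne (bproj x)
    obtain ⟨y, hy, rfl⟩ := hmem t ht
    refine ⟨y, hy, ?_⟩
    by_cases hb : bproj x = bproj y
    · by_cases hxy : x = y
      · rw [hxy, h0]
        exact (hnn _ _).trans hdt
      · rwa [hcopy x y hxy hb]
    · rwa [hdist x y hb]
  have hOPTle : OPT' ≤ OPT := by
    rw [hOPT]
    -- Without a fair set, `sInf ∅` would be the junk value `0`.
    refine le_csInf ?_ ?_
    · obtain ⟨T, -, h1, h2⟩ := exists_fair_superset (P := ∅) hdisj hunion hr1' hr2'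
        (by simp) (by simp)
      exact ⟨_, T, h1, h2, rfl⟩
    · rintro c ⟨T, h1, h2, rfl⟩
      exact hlift T h1 h2
  have hc := card_image_bproj_inter_le hdisj hShat
  obtain ⟨T, hPT, h1, h2⟩ := exists_fair_superset hdisj hunion hr1' hr2' hc.1 hc.2
  have hSne : Shat.Nonempty := by
    have : 0 < (Shat ∩ grp1 G1 G2 r1 r2 ⟨0, hr1⟩).card := by rw [hShat.1]; exact one_pos
    exact (Finset.card_pos.mp this).mono Finset.inter_subset_left
  refine ⟨T, h1, h2, ?_⟩
  calc kcost d T ≤ kcost d' Shat := by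
        refine kcost_le_of_forall_exists _ _ _ fun u => ?_
        obtain ⟨x, rfl⟩ := hsurj u
        obtain ⟨s, hs, hle⟩ := exists_le_kcost d' Shat hSne x
        exact ⟨bproj s, hPT (Finset.mem_image_of_mem _ hs), (hproj x s).trans hle⟩
    _ ≤ α * OPT' := happrox
    _ ≤ α * OPT := mul_le_mul_of_nonneg_left hOPTle (by linarith)
end
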